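/- Let X ⊆ A^ℤ be a transitive subshift of finite type that is not mixing. Then X is not the generic limit set of any cellular automaton on A^ℤ. -/

import Mathlib

open Filter Set Function

namespace Gls

variable {A : Type*}

/-- The left shift map on `A^ℤ`. -/
def shift (x : ℤ → A) : ℤ → A := fun i => x (i + 1)

/-- A cellular automaton: a continuous shift-commuting self-map of the full shift. -/
def IsCA [TopologicalSpace A] (f : (ℤ → A) → (ℤ → A)) : Prop :=
  Continuous f ∧ f ∘ shift = shift ∘ f

/-- The set of limit points of the forward orbit of `x` under `f`. -/
def omegaSet [TopologicalSpace A] (f : (ℤ → A) → (ℤ → A)) (x : ℤ → A) : Set (ℤ → A) :=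
  {y | MapClusterPt y atTop fun t => f^[t] x}

/-- The realm of attraction of `Y`. -/
def realm [TopologicalSpace A] (f : (ℤ → A) → (ℤ → A)) (Y : Set (ℤ → A)) : Set (ℤ → A) :=
  {x | omegaSet f x ⊆ Y}

/-- The generic limit set: the intersection of all closed sets whose realm is comeager. -/
def genLimitSet [TopologicalSpace A] (f : (ℤ → A) → (ℤ → A)) : Set (ℤ → A) :=
  ⋂₀ {C | IsClosed C ∧ realm f C ∈ residual (ℤ → A)}

/-- The word `x_{[i, i+n)}` of length `n` read in the configuration `x` from position `i`. -/
def word (x : ℤ → A) (i : ℤ) (n : ℕ) : List A :=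
  (List.range n).map fun k => x (i + k)

/-- The cylinder set `[w]_i`. -/
def cylinder (w : List A) (i : ℤ) : Set (ℤ → A) := {x | word x i w.length = w}

/-- The language of `X`: all finite words occurring in points of `X`. -/
def lang (X : Set (ℤ → A)) : Set (List A) :=
  {w | ∃ x ∈ X, ∃ i : ℤ, word x i w.length = w}


/-- A subshift `Y` is transitive if any two words of its language can be joined. -/
def IsTransitiveSubshift {A : Type*} (Y : Set (ℤ → A)) : Prop :=
  ∀ u ∈ lang Y, ∀ v ∈ lang Y, ∃ w : List A, u ++ w ++ v ∈ lang Y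

/-- A subshift `X` is mixing if for all `u, v ∈ L(X)` there exists `N` such that for every
`n ≥ N` there is a word `w` of length `n` with `u w v ∈ L(X)`. -/
def IsMixing {A : Type*} (X : Set (ℤ → A)) : Prop :=
  ∀ u ∈ lang X, ∀ v ∈ lang X, ∃ N : ℕ, ∀ n ≥ N, ∃ w : List A,
    w.length = n ∧ u ++ w ++ v ∈ lang X

/-- Gluing property of SFTs. -/
def GlueProp (X : Set (ℤ → A)) (m : ℕ) : Prop :=
  ∀ x ∈ X, ∀ y ∈ X, ∀ n : ℤ, (∀ i : ℤ, 0 ≤ i → i < m → x (n + i) = y i) →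
    ∃ z ∈ X, (∀ i < n, z i = x i) ∧ (∀ i : ℤ, 0 ≤ i → z (n + i) = y i)

/-- Paths: a point of `X` reading `x` at 0 and `y` at `n` on windows of length `a`. -/
def Path (X : Set (ℤ → A)) (a : ℕ) (x : ℤ → A) (n : ℕ) (y : ℤ → A) : Prop :=
  ∃ z ∈ X, (∀ i : ℤ, 0 ≤ i → i < a → z i = x i) ∧ (∀ i : ℤ, 0 ≤ i → i < a → z (n + i) = y i)

lemma word_def (x : ℤ → A) (i : ℤ) (n : ℕ) :
    word x i n = (List.range n).map (fun k : ℕ => x (i + (k : ℤ))) := by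
  simp only [word, List.bind_eq_flatMap, List.pure_def, List.flatMap_singleton', List.map_flatMap,
    List.map_cons, List.map_nil]
  exact List.flatMap_pure_eq_map _ _

lemma word_eq_iff (x y : ℤ → A) (i j : ℤ) (n : ℕ) :
    word x i n = word y j n ↔ ∀ k : ℕ, k < n → x (i + k) = y (j + k) := by
  simp [word_def]

lemma word_length (x : ℤ → A) (i : ℤ) (n : ℕ) : (word x i n).length = n := by
  simp [word]

lemma word_add (x : ℤ → A) (i : ℤ) (n k : ℕ) :
    word x i (n + k) = word x i n ++ word x (i + n) k := by
  simp only [word_def, List.range_add, List.map_append, List.map_map]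
  congr 1
  apply List.map_congr_left
  intro a _
  simp [add_assoc]

/-- integer shift -/
def sh (n : ℤ) (x : ℤ → A) : ℤ → A := fun i => x (i + n)

lemma sh_shift_iter (n : ℕ) (x : ℤ → A) : shift^[n] x = sh n x := by
  induction n generalizing x with
  | zero => funext i; simp [sh]
  | succ k ih =>
    rw [iterate_succ_apply, ih]
    funext i
    simp only [sh, shift]
    congr 1
    push_cast
    ring

lemma word_sh (x : ℤ → A) (i n : ℤ) (k : ℕ) : word (sh n x) i k = word x (i + n) k := by
  rw [word_eq_iff]
  intro j _
  simp only [sh]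
  congr 1
  ring

lemma sft_sh {X : Set (ℤ → A)} (hSFT : ∃ F : Set (List A), F.Finite ∧
      X = {x : ℤ → A | ∀ w ∈ F, ∀ i : ℤ, word x i w.length ≠ w}) (n : ℤ) {x : ℤ → A}
    (hx : x ∈ X) : sh n x ∈ X := by
  obtain ⟨F, -, rfl⟩ := hSFT
  intro w hw i
  rw [word_sh]
  exact hx w hw _

lemma sft_glue {X : Set (ℤ → A)} (hSFT : ∃ F : Set (List A), F.Finite ∧
      X = {x : ℤ → A | ∀ w ∈ F, ∀ i : ℤ, word x i w.length ≠ w}) :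
    ∃ m : ℕ, GlueProp X m := by
  obtain ⟨F, hF, rfl⟩ := hSFT
  obtain ⟨m, hm⟩ := (hF.image List.length).bddAbove
  refine ⟨m, fun x hx y hy n h => ?_⟩
  refine ⟨fun i => if i < n then x i else y (i - n), ?_, ?_, ?_⟩
  · intro w hw i
    have hl : w.length ≤ m := hm ⟨w, hw, rfl⟩
    by_cases hi : i < n
    · have : word (fun i => if i < n then x i else y (i - n)) i w.length = word x i w.length := by
        rw [word_eq_iff]
        intro k hk
        split_ifs with h1
        · rfl
        · rw [← h (i + k - n) (by omega) (by omega)]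
          congr 1
          ring
      rw [this]
      exact hx w hw i
    · have : word (fun i => if i < n then x i else y (i - n)) i w.length
          = word y (i - n) w.length := by
        rw [word_eq_iff]
        intro k hk
        rw [if_neg (by omega)]
        congr 1
        ring
      rw [this]
      exact hy w hw _
  · intro i hi
    simp [hi]
  · intro i hi
    have : ¬ (n + i < n) := by omega
    simp [hi]

lemma Path.trans {X : Set (ℤ → A)} {m : ℕ} (hg : GlueProp X m) {a : ℕ} (ha : m ≤ a)
    {x y z : ℤ → A} {n k : ℕ} (h1 : Path X a x n y) (h2 : Path X a y k z) :
    Path X a x (n + k) z := by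
  obtain ⟨p, hp, hp1, hp2⟩ := h1
  obtain ⟨q, hq, hq1, hq2⟩ := h2
  obtain ⟨r, hr, hr1, hr2⟩ := hg p hp q hq n (fun i h0 h1 => by
    rw [hp2 i h0 (by omega), hq1 i h0 (by omega)])
  refine ⟨r, hr, ?_, ?_⟩
  · intro i h0 h1
    by_cases hi : i < n
    · rw [hr1 i hi, hp1 i h0 h1]
    · have e : i = n + (i - n) := by ring
      rw [← hp1 i h0 h1, e, hr2 _ (by omega), hp2 _ (by omega) (by omega),
        hq1 _ (by omega) (by omega)]
  · intro i h0 h1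
    have : ((n + k : ℕ) : ℤ) + i = n + (k + i) := by push_cast; ring
    rw [this, hr2 _ (by omega), hq2 _ h0 h1]

lemma Path.mono {X : Set (ℤ → A)} {a b : ℕ} (hab : a ≤ b) {x y : ℤ → A} {n : ℕ}
    (h : Path X b x n y) : Path X a x n y := by
  obtain ⟨p, hp, hp1, hp2⟩ := h
  exact ⟨p, hp, fun i h0 h1 => hp1 i h0 (by omega), fun i h0 h1 => hp2 i h0 (by omega)⟩

lemma trans_path {X : Set (ℤ → A)} (hsh : ∀ n : ℤ, ∀ x ∈ X, sh n x ∈ X)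
    (ht : IsTransitiveSubshift X) {x y : ℤ → A} (hx : x ∈ X) (hy : y ∈ X) (a : ℕ) :
    ∃ n : ℕ, a ≤ n ∧ Path X a x n y := by
  obtain ⟨w, z, hz, i, h⟩ := ht (word x 0 a) ⟨x, hx, 0, by rw [word_length]⟩
    (word y 0 a) ⟨y, hy, 0, by rw [word_length]⟩
  simp only [List.length_append, word_length] at h
  rw [word_add, word_add] at h
  obtain ⟨h1, h2⟩ := List.append_inj h (by simp [word_length])
  obtain ⟨h1, -⟩ := List.append_inj h1 (by simp [word_length])
  rw [word_eq_iff] at h1 h2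
  refine ⟨a + w.length, by omega, sh i z, hsh _ _ hz, ?_, ?_⟩
  · intro j h0 hj
    lift j to ℕ using h0
    have := h1 j (by omega)
    simpa [sh, add_comm] using this
  · intro j h0 hj
    lift j to ℕ using h0
    have := h2 j (by omega)
    simp only [sh]
    rw [zero_add] at this
    rw [← this]
    congr 1
    push_cast
    ring

lemma mixing_of_path {X : Set (ℤ → A)} (hsh : ∀ n : ℤ, ∀ x ∈ X, sh n x ∈ X)
    (h : ∀ x ∈ X, ∀ y ∈ X, ∀ a : ℕ, ∃ N : ℕ, ∀ n ≥ N, Path X a x n y) : IsMixing X := by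
  rintro u ⟨x, hx, i, hu⟩ v ⟨y, hy, j, hv⟩
  obtain ⟨N, hN⟩ := h _ (hsh i x hx) _ (hsh j y hy) (max u.length v.length)
  refine ⟨N, fun n hn => ?_⟩
  obtain ⟨z, hz, h1, h2⟩ := hN (u.length + n) (by omega)
  refine ⟨word z u.length n, word_length _ _ _, z, hz, 0, ?_⟩
  simp only [List.length_append, word_length]
  rw [word_add, word_add]
  congr 1
  · congr 1
    · conv_rhs => rw [← hu]
      rw [word_eq_iff]
      intro k hk
      have := h1 k (by omega) (by push_cast; omega)
      simpa [sh, add_comm] using this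
    · simp
  · conv_rhs => rw [← hv]
    rw [word_eq_iff]
    intro k hk
    have := h2 k (by omega) (by push_cast; omega)
    simp only [sh] at this
    rw [add_comm j, ← this]
    congr 1
    push_cast
    ring

lemma exists_period {X : Set (ℤ → A)} (hsh : ∀ n : ℤ, ∀ x ∈ X, sh n x ∈ X) {m : ℕ}
    (hg : GlueProp X m) (ht : IsTransitiveSubshift X) (hnm : ¬ IsMixing X)
    {x0 : ℤ → A} (hx0 : x0 ∈ X) :
    ∃ p : ℕ, 2 ≤ p ∧ ∀ n, Path X m x0 n x0 → p ∣ n := by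
  set R : Set ℕ := {n | Path X m x0 n x0} with hR
  have hcl : ∀ n ∈ AddSubmonoid.closure R, n ∈ R := by
    intro n hn
    induction hn using AddSubmonoid.closure_induction with
    | mem x hx => exact hx
    | zero => exact ⟨x0, hx0, fun i _ _ => rfl, fun i _ _ => by simp⟩
    | add x y _ _ hx hy => exact Path.trans hg le_rfl hx hy
  refine ⟨Nat.setGcd R, ?_, fun n hn => Nat.setGcd_dvd_of_mem hn⟩
  by_contra hlt
  have h0 : Nat.setGcd R ≠ 0 := by
    intro h0
    rw [Nat.setGcd_eq_zero_iff] at h0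
    obtain ⟨n, hn, hp⟩ := trans_path hsh ht hx0 hx0 (m + 1)
    have : n ∈ R := hp.mono (by omega)
    have := h0 this
    simp at this
    omega
  have h1 : Nat.setGcd R = 1 := by omega
  obtain ⟨N, hN⟩ := Nat.exists_mem_closure_of_ge R
  apply hnm
  apply mixing_of_path hsh
  -- pass through a long window of x0: use only length-m windows in the middle
  intro x hx y hy a
  obtain ⟨n1, hn1, z1, hz1, h11, h12⟩ := trans_path hsh ht hx hx0 (a + m)
  obtain ⟨n2, hn2, z2, hz2, h21, h22⟩ := trans_path hsh ht hx0 hy (a + m)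
  refine ⟨N + n1 + n2, fun n hn => ?_⟩
  obtain ⟨z, hz, hz3, hz4⟩ : Path X m x0 (n - n1 - n2) x0 :=
    hcl _ (hN _ (by omega) (by rw [h1]; exact one_dvd _))
  obtain ⟨k, hk⟩ : ∃ k, n = n1 + k + n2 := ⟨n - n1 - n2, by omega⟩
  have hk' : n - n1 - n2 = k := by omega
  rw [hk'] at hz4
  obtain ⟨q, hq, hq1, hq2⟩ := hg z1 hz1 z hz n1 (fun i h0 h1 => by
    rw [h12 i h0 (by omega), hz3 i h0 h1])
  obtain ⟨r, hr, hr1, hr2⟩ := hg q hq z2 hz2 (n1 + k) (fun i h0 h1 => by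
    rw [add_assoc, hq2 _ (by omega), hz4 i h0 h1, h21 i h0 (by omega)])
  refine ⟨r, hr, ?_, ?_⟩
  · intro i h0 h1
    rw [hr1 i (by omega), hq1 i (by omega), h11 i h0 (by omega)]
  · intro i h0 h1
    have : (n : ℤ) + i = n1 + k + (n2 + i) := by rw [hk]; push_cast; ring
    rw [this, hr2 _ (by omega), h22 _ h0 (by omega)]

lemma locConst_of_window [TopologicalSpace A] [DiscreteTopology A] {β : Type*} (m : ℕ)
    (g : (ℤ → A) → β)
    (h : ∀ x y : ℤ → A, (∀ i : ℤ, 0 ≤ i → i < m → y i = x i) → g y = g x) :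
    IsLocallyConstant g := by
  rw [IsLocallyConstant.iff_eventually_eq]
  intro x
  have : ∀ i ∈ Finset.Ico (0 : ℤ) m, ∀ᶠ y in nhds x, y i = x i := by
    intro i _
    have h1 : ∀ᶠ b in nhds (x i), b = x i := by simp [nhds_discrete]
    exact ((continuous_apply i).tendsto x).eventually h1
  rw [← Filter.eventually_all_finset] at this
  filter_upwards [this] with y hy
  exact h x y fun i h0 h1 => hy i (Finset.mem_Ico.2 ⟨h0, h1⟩)

lemma window_of_open [TopologicalSpace A] [DiscreteTopology A] {U : Set (ℤ → A)}
    (hU : IsOpen U) {x : ℤ → A} (hx : x ∈ U) :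
    ∃ a : ℕ, ∀ y : ℤ → A, (∀ i : ℤ, -a ≤ i → i < a → y i = x i) → y ∈ U := by
  rw [isOpen_pi_iff] at hU
  obtain ⟨I, u, hu, hs⟩ := hU x hx
  refine ⟨I.sup Int.natAbs + 1, fun y hy => hs ?_⟩
  intro i hi
  have : i.natAbs ≤ I.sup Int.natAbs := Finset.le_sup (f := Int.natAbs) hi
  rw [hy i (by push_cast; omega) (by push_cast; omega)]
  exact (hu i hi).2

lemma exists_phase [TopologicalSpace A] [DiscreteTopology A] {X : Set (ℤ → A)}
    (hSFT : ∃ F : Set (List A), F.Finite ∧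
      X = {x : ℤ → A | ∀ w ∈ F, ∀ i : ℤ, word x i w.length ≠ w})
    (ht : IsTransitiveSubshift X) (hnm : ¬ IsMixing X) :
    ∃ p : ℕ, 2 ≤ p ∧ ∃ g : (ℤ → A) → ZMod p, IsLocallyConstant g ∧
      ∀ x ∈ X, g (shift x) = g x + 1 := by
  have hsh : ∀ n : ℤ, ∀ x ∈ X, sh n x ∈ X := fun n x hx => sft_sh hSFT n hx
  obtain ⟨m, hg⟩ := sft_glue hSFT
  obtain ⟨x0, hx0⟩ : X.Nonempty := by
    by_contra h
    rw [not_nonempty_iff_eq_empty] at h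
    apply hnm
    rintro u ⟨x, hx, -⟩
    simp [h] at hx
  obtain ⟨p, hp, hR⟩ := exists_period hsh hg ht hnm hx0
  classical
  let g : (ℤ → A) → ZMod p := fun x =>
    if h : ∃ n : ℕ, Path X m x n x0 then -(h.choose : ZMod p) else 0
  have key : ∀ x ∈ X, ∀ n, Path X m x n x0 → g x = -(n : ZMod p) := by
    intro x hx n hn
    have hex : ∃ n : ℕ, Path X m x n x0 := ⟨n, hn⟩
    have h1 : g x = -(hex.choose : ZMod p) := dif_pos hex
    obtain ⟨j, -, hj⟩ := trans_path hsh ht hx0 hx m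
    have e1 := hR _ (hj.trans hg le_rfl hn)
    have e2 := hR _ (hj.trans hg le_rfl hex.choose_spec)
    rw [← ZMod.natCast_eq_zero_iff] at e1 e2
    push_cast at e1 e2
    rw [h1]
    linear_combination e1 - e2
  refine ⟨p, hp, g, ?_, ?_⟩
  · apply locConst_of_window m
    intro x y hxy
    have : ∀ n, Path X m y n x0 ↔ Path X m x n x0 := by
      intro n
      constructor
      · rintro ⟨z, hz, h1, h2⟩
        exact ⟨z, hz, fun i a b => by rw [h1 i a b, hxy i a b], h2⟩
      · rintro ⟨z, hz, h1, h2⟩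
        exact ⟨z, hz, fun i a b => by rw [h1 i a b, hxy i a b], h2⟩
    simp only [g, this]
  · intro x hx
    have hx' : shift x ∈ X := hsh 1 x hx
    obtain ⟨n, -, hn⟩ := trans_path hsh ht hx' hx0 m
    have h1 : Path X m x 1 (shift x) :=
      ⟨x, hx, fun i _ _ => rfl, fun i _ _ => by simp [shift, add_comm]⟩
    rw [key _ hx' n hn, key _ hx _ (h1.trans hg le_rfl hn)]
    push_cast
    ring

lemma continuous_shift [TopologicalSpace A] : Continuous (shift (A := A)) :=
  continuous_pi fun i => continuous_apply (i + 1)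

/-- Shift-invariant locally constant functions are constant on transitive subshifts. -/
lemma const_of_transitive [TopologicalSpace A] [DiscreteTopology A] {X : Set (ℤ → A)}
    (hsh : ∀ n : ℤ, ∀ x ∈ X, sh n x ∈ X) (ht : IsTransitiveSubshift X) {β : Type*}
    {D : (ℤ → A) → β} (hD : IsLocallyConstant D) (hinv : ∀ x ∈ X, D (shift x) = D x)
    {x y : ℤ → A} (hx : x ∈ X) (hy : y ∈ X) : D x = D y := by
  have hit : ∀ n : ℕ, ∀ z ∈ X, D (sh n z) = D z := by
    intro n
    induction n with
    | zero => intro z _; rw [← sh_shift_iter]; rfl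
    | succ k ih =>
      intro z hz
      rw [← sh_shift_iter, iterate_succ_apply', hinv, sh_shift_iter, ih z hz]
      rw [sh_shift_iter]
      exact hsh _ _ hz
  obtain ⟨a, ha⟩ := window_of_open (hD.isOpen_fiber (D x)) (x := x) rfl
  obtain ⟨b, hb⟩ := window_of_open (hD.isOpen_fiber (D y)) (x := y) rfl
  set c := max a b with hc
  obtain ⟨n, -, z, hz, h1, h2⟩ := trans_path hsh ht (hsh (-c) x hx) (hsh (-c) y hy) (2 * c)
  have e1 : D (sh c z) = D x := by
    apply ha
    intro i hi1 hi2
    have := h1 (i + c) (by omega) (by push_cast; omega)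
    simpa [sh] using this
  have e2 : D (sh n (sh c z)) = D y := by
    apply hb
    intro i hi1 hi2
    have := h2 (i + c) (by omega) (by push_cast; omega)
    simp only [sh] at this ⊢
    rw [show i + n + (c : ℤ) = n + (i + c) by ring, this]
    congr 1
    ring
  rw [← e1, ← e2, hit _ _ (hsh _ _ hz)]

lemma realm_genLimitSet [Finite A] [TopologicalSpace A] [DiscreteTopology A]
    (f : (ℤ → A) → (ℤ → A)) : realm f (genLimitSet f) ∈ residual (ℤ → A) := by
  obtain ⟨T, hTc, hTS, hT⟩ := TopologicalSpace.isOpen_sUnion_countable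
    (compl '' {C : Set (ℤ → A) | IsClosed C ∧ realm f C ∈ residual (ℤ → A)})
    (by rintro _ ⟨C, hC, rfl⟩; exact hC.1.isOpen_compl)
  have : ⋂ s ∈ T, realm f sᶜ ∈ residual (ℤ → A) := by
    rw [countable_bInter_mem hTc]
    intro s hs
    obtain ⟨C, hC, rfl⟩ := hTS hs
    rw [compl_compl]
    exact hC.2
  filter_upwards [this] with x hx y hy
  by_contra hyn
  have : y ∈ ⋃₀ T := by
    rw [hT]
    simp only [genLimitSet, mem_sInter, not_forall] at hyn
    obtain ⟨C, hC, hyC⟩ := hyn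
    exact ⟨Cᶜ, ⟨C, hC, rfl⟩, hyC⟩
  obtain ⟨s, hs, hys⟩ := this
  simp only [mem_iInter] at hx
  exact hx s hs hy hys

lemma map_genLimitSet [Finite A] [TopologicalSpace A] [DiscreteTopology A]
    {f : (ℤ → A) → (ℤ → A)} (hf : Continuous f) (hcl : IsClosed (genLimitSet f))
    {x : ℤ → A} (hx : x ∈ genLimitSet f) : f x ∈ genLimitSet f := by
  have : f ⁻¹' (genLimitSet f) ∈
      {C : Set (ℤ → A) | IsClosed C ∧ realm f C ∈ residual (ℤ → A)} := by
    refine ⟨hcl.preimage hf, ?_⟩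
    filter_upwards [realm_genLimitSet f] with z hz y hy
    apply hz
    have h1 : MapClusterPt (f y) atTop (f ∘ fun t => f^[t] z) :=
      MapClusterPt.continuousAt_comp hf.continuousAt hy
    have h2 : (f ∘ fun t => f^[t] z) = (fun t => f^[t] z) ∘ (fun t => t + 1) := by
      funext t
      simp only [comp_apply, iterate_succ_apply']
    rw [h2] at h1
    exact MapClusterPt.of_comp (tendsto_add_atTop_nat 1) h1
  exact mem_sInter.1 hx _ this

lemma eventually_mem [Finite A] [TopologicalSpace A] [DiscreteTopology A]
    {f : (ℤ → A) → (ℤ → A)} {X O : Set (ℤ → A)} (hO : IsOpen O) (hXO : X ⊆ O) {x : ℤ → A}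
    (hx : x ∈ realm f X) : ∀ᶠ t in atTop, f^[t] x ∈ O := by
  by_contra h
  rw [not_eventually] at h
  obtain ⟨y, hy, hc⟩ := hO.isClosed_compl.isCompact.exists_mapClusterPt_of_frequently
    (l := atTop) (f := fun t => f^[t] x) h
  exact hy (hXO (hx hc))

lemma full_mixing [TopologicalSpace A] [DiscreteTopology A] {V : Set (ℤ → A)} (hV : IsOpen V)
    (hne : V.Nonempty) {p : ℕ} (hp : 2 ≤ p) :
    ∃ n : ℕ, (n : ZMod p) = 1 ∧ (V ∩ shift^[n] ⁻¹' V).Nonempty := by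
  obtain ⟨x, hx⟩ := hne
  obtain ⟨a, ha⟩ := window_of_open hV hx
  have hle : 2 * a ≤ p * (2 * a) := Nat.le_mul_of_pos_left _ (by omega)
  refine ⟨p * (2 * a) + 1, by simp, fun i => if i < a then x i else x (i - (p * (2 * a) + 1 : ℕ)),
    ?_, ?_⟩
  · apply ha
    intro i _ h
    simp [h]
  · simp only [mem_preimage, sh_shift_iter]
    apply ha
    intro i h _
    simp only [sh]
    rw [if_neg (by omega)]
    congr 1
    ring

/-- a transitive but non-mixing subshift of finite type is not the generic
limit set of any cellular automaton. -/
theorem stmt19 [Fintype A] [Nonempty A] [TopologicalSpace A] [DiscreteTopology A]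
    (X : Set (ℤ → A))
    (hSFT : ∃ F : Set (List A), F.Finite ∧
      X = {x : ℤ → A | ∀ w ∈ F, ∀ i : ℤ, word x i w.length ≠ w})
    (htrans : IsTransitiveSubshift X) (hnotmix : ¬ IsMixing X) :
    ∀ f : (ℤ → A) → (ℤ → A), IsCA f → genLimitSet f ≠ X := by
  rintro f ⟨hf, hcomm⟩ hfX
  have hsh : ∀ n : ℤ, ∀ x ∈ X, sh n x ∈ X := fun n x hx => sft_sh hSFT n hx
  obtain ⟨p, hp, g, hg, hgs⟩ := exists_phase hSFT htrans hnotmix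
  have hcl : IsClosed (genLimitSet f) := isClosed_sInter fun C hC => hC.1
  have hmap : ∀ x ∈ X, f x ∈ X := by
    intro x hx
    rw [← hfX] at hx ⊢
    exact map_genLimitSet hf hcl hx
  have hres : realm f X ∈ residual (ℤ → A) := by
    rw [← hfX]
    exact realm_genLimitSet f
  have hsemi : Function.Commute f shift := fun x => congrFun hcomm x
  have hgf : IsLocallyConstant (g ∘ f) := hg.comp_continuous hf
  have hgσ : IsLocallyConstant (g ∘ shift) := hg.comp_continuous continuous_shift
  have hD : IsLocallyConstant (fun x => g (f x) - g x) := hgf.sub hg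
  obtain ⟨k, hk⟩ : ∃ k : ZMod p, ∀ x ∈ X, g (f x) - g x = k := by
    rcases X.eq_empty_or_nonempty with h | ⟨x, hx⟩
    · exact ⟨0, by simp [h]⟩
    · refine ⟨g (f x) - g x, fun y hy => ?_⟩
      refine const_of_transitive hsh htrans hD ?_ hy hx
      intro z hz
      rw [hsemi z, hgs _ (hmap z hz), hgs _ hz]
      ring
  have hE : IsLocallyConstant (fun x => (g (shift x) - g x, g (f x) - g x)) :=
    (hgσ.sub hg).prodMk hD
  set O : Set (ℤ → A) := {x | (g (shift x) - g x, g (f x) - g x) = (1, k)} with hOdef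
  have hOo : IsOpen O := hE.isOpen_fiber _
  have hOc : IsClosed O := hE.isClosed_fiber _
  have hXO : X ⊆ O := by
    intro x hx
    simp only [hOdef, mem_ofPred_eq, Prod.mk.injEq]
    exact ⟨by rw [hgs x hx]; ring, hk x hx⟩
  have hO1 : ∀ x ∈ O, g (shift x) = g x + 1 := by
    intro x hx
    have := (Prod.mk.inj hx).1
    linear_combination this
  have hO2 : ∀ x ∈ O, g (f x) = g x + k := by
    intro x hx
    have := (Prod.mk.inj hx).2
    linear_combination this
  -- Baire category argument
  obtain ⟨G, hGX, hGδ, hGd⟩ := mem_residual.1 hres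
  let E : ℕ → Set (ℤ → A) := fun T => {x | ∀ t ≥ T, f^[t] x ∈ O}
  have hEc : ∀ T, IsClosed (E T) := by
    intro T
    have : E T = ⋂ t, ⋂ (_ : t ≥ T), f^[t] ⁻¹' O := by
      ext x
      simp [E]
    rw [this]
    exact isClosed_iInter fun t => isClosed_iInter fun _ => hOc.preimage (hf.iterate t)
  have hGE : G ⊆ ⋃ T, E T := by
    intro x hx
    obtain ⟨T, hT⟩ := eventually_atTop.1 (eventually_mem hOo hXO (hGX hx))
    exact mem_iUnion.2 ⟨T, hT⟩
  obtain ⟨x1, hx1⟩ := (hGδ.dense_iUnion_interior_of_closed hGd hEc hGE).nonempty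
  obtain ⟨T, hx1⟩ := mem_iUnion.1 hx1
  have hgT : IsLocallyConstant (g ∘ f^[T]) := hg.comp_continuous (hf.iterate T)
  set V : Set (ℤ → A) := interior (E T) ∩ {x | (g ∘ f^[T]) x = (g ∘ f^[T]) x1} with hVdef
  have hV : IsOpen V := isOpen_interior.inter (hgT.isOpen_fiber _)
  have hVg : ∀ x ∈ V, ∀ s : ℕ, g (f^[T + s] x) = g (f^[T] x1) + s * k := by
    intro x hx s
    induction s with
    | zero => simpa using hx.2
    | succ s ih =>
      rw [← add_assoc, iterate_succ_apply', hO2 _ (interior_subset hx.1 _ (by omega)), ih]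
      push_cast
      ring
  obtain ⟨n, hn1, hne⟩ := full_mixing hV ⟨x1, hx1, rfl⟩ hp
  have hopen : IsOpen (V ∩ shift^[n] ⁻¹' V) := hV.inter (hV.preimage (continuous_shift.iterate n))
  obtain ⟨x, ⟨hxV, hxV'⟩, hxR⟩ := (dense_of_mem_residual hres).inter_open_nonempty _ hopen hne
  have hev : ∀ᶠ t in atTop, ∀ j ∈ Finset.range n, f^[t] x ∈ shift^[j] ⁻¹' O := by
    rw [Filter.eventually_all_finset]
    intro j _
    refine eventually_mem (hOo.preimage (continuous_shift.iterate j)) ?_ hxR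
    intro y hy
    rw [mem_preimage, sh_shift_iter]
    exact hXO (hsh _ _ hy)
  obtain ⟨t, hts, htT⟩ := (hev.and (eventually_ge_atTop T)).exists
  have hphase : ∀ j ≤ n, g (shift^[j] (f^[t] x)) = g (f^[t] x) + j := by
    intro j hj
    induction j with
    | zero => simp
    | succ j ih =>
      rw [iterate_succ_apply', hO1 _ (hts j (Finset.mem_range.2 (by omega))), ih (by omega)]
      push_cast
      ring
  have h1 := hphase n le_rfl
  obtain ⟨s, rfl⟩ := Nat.exists_eq_add_of_le htT
  rw [← (hsemi.iterate_iterate (T + s) n) x, hVg _ hxV s, hVg _ hxV' s, hn1] at h1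
  have h10 : (1 : ZMod p) = 0 := by linear_combination -h1
  have : Fact (1 < p) := ⟨by omega⟩
  exact one_ne_zero h10


end Gls
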